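/- For b ∈ ℂ, the twisted operators σ_b(L_m) = -tᵐD - (m/2)tᵐθ∂_θ - mb tᵐ, σ_b(H_m) = tᵐθ∂_θ - 2b tᵐ, σ_b(G^+_m) = -2tᵐθD - 4bm tᵐθ, σ_b(G^-_m) = tᵐ∂_θ in the Weyl superalgebra satisfy [σ_b(L_m), σ_b(G^+_n)] = (m/2 - n) σ_b(G^+_{m+n}) for all m, n ∈ ℤ. -/

import Mathlib

/-- `t^k` for `k : ℤ`, using `tinv` for negative powers. -/
noncomputable def tzpow {R : Type*} [Ring R] (t tinv : R) (k : ℤ) : R :=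
  if 0 ≤ k then t ^ k.toNat else tinv ^ (-k).toNat

/-- `σ_b(L_m) = -tᵐD - (m/2)tᵐθ∂_θ - mb tᵐ` with `D = t∂_t`. -/
noncomputable def sigL {R : Type*} [Ring R] [Algebra ℂ R] (t tinv dt th dth : R)
    (b : ℂ) (m : ℤ) : R :=
  -(tzpow t tinv m * (t * dt)) - ((m : ℂ) / 2) • (tzpow t tinv m * (th * dth))
    - ((m : ℂ) * b) • tzpow t tinv m

/-- `σ_b(G⁺_m) = -2tᵐθD - 4bm tᵐθ`. -/
noncomputable def sigGp {R : Type*} [Ring R] [Algebra ℂ R] (t tinv dt th dth : R)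
    (b : ℂ) (m : ℤ) : R :=
  (-2 : ℂ) • (tzpow t tinv m * (th * (t * dt))) - (4 * b * (m : ℂ)) • (tzpow t tinv m * th)

theorem tzpow_eq_units {R : Type*} [Ring R] (u : Rˣ) (k : ℤ) :
    tzpow (u : R) ((u⁻¹ : Rˣ) : R) k = ((u ^ k : Rˣ) : R) := by
  unfold tzpow
  split_ifs with h
  · lift k to ℕ using h
    simp
  · obtain ⟨j, rfl⟩ : ∃ j : ℕ, k = -(j : ℤ) := ⟨(-k).toNat, by omega⟩
    rw [neg_neg, Int.toNat_natCast, zpow_neg, zpow_natCast, ← Units.val_pow_eq_pow_val, inv_pow]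

theorem euler_zpow {R : Type*} [Ring R] [Algebra ℂ R] (u : Rˣ) (D : R)
    (h : D * u = u * D + u) (k : ℤ) :
    D * ((u ^ k : Rˣ) : R) = ((u ^ k : Rˣ) : R) * D + (k : ℂ) • ((u ^ k : Rˣ) : R) := by
  have hinv : D * ((u⁻¹ : Rˣ) : R) = ((u⁻¹ : Rˣ) : R) * D - ((u⁻¹ : Rˣ) : R) := by
    have e : ((u⁻¹ : Rˣ) : R) * (D * u) * ((u⁻¹ : Rˣ) : R)
        = ((u⁻¹ : Rˣ) : R) * (u * D + u) * ((u⁻¹ : Rˣ) : R) := by rw [h]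
    simp only [mul_add, add_mul, mul_assoc, Units.mul_inv, Units.inv_mul_cancel_left, mul_one] at e
    rw [e]; abel
  induction k using Int.induction_on with
  | zero => simp
  | succ i ih =>
    rw [zpow_add_one, Units.val_mul, ← mul_assoc, ih, add_mul, mul_assoc, h, mul_add, smul_mul_assoc]
    push_cast
    simp only [mul_assoc]
    module
  | pred i ih =>
    rw [zpow_sub_one, Units.val_mul, ← mul_assoc, ih, add_mul, mul_assoc, hinv, mul_sub,
      smul_mul_assoc]
    push_cast
    simp only [mul_assoc]
    module

/-- In the Weyl superalgebra, the twisted operators satisfy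
`[σ_b(L_m), σ_b(G⁺_n)] = (m/2 - n) σ_b(G⁺_{m+n})`. -/
theorem stmt9 {R : Type*} [Ring R] [Algebra ℂ R] (t tinv dt th dth : R) (b : ℂ)
    (h1 : dt * t - t * dt = 1) (h2 : t * tinv = 1) (h3 : tinv * t = 1)
    (h4 : dth * th + th * dth = 1) (h5 : th * th = 0) (h6 : dth * dth = 0)
    (h7 : t * th = th * t) (h8 : t * dth = dth * t)
    (h9 : dt * th = th * dt) (h10 : dt * dth = dth * dt)
    (h11 : tinv * th = th * tinv) (h12 : tinv * dth = dth * tinv) :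
    ∀ m n : ℤ,
      sigL t tinv dt th dth b m * sigGp t tinv dt th dth b n
        - sigGp t tinv dt th dth b n * sigL t tinv dt th dth b m
      = ((m : ℂ) / 2 - n) • sigGp t tinv dt th dth b (m + n) := by
  intro m n
  obtain ⟨u, rfl, rfl⟩ : ∃ u : Rˣ, (u : R) = t ∧ ((u⁻¹ : Rˣ) : R) = tinv :=
    ⟨⟨t, tinv, h2, h3⟩, rfl, rfl⟩
  unfold sigL sigGp
  simp only [tzpow_eq_units]
  have hD : (u * dt : R) * u = u * (u * dt) + u := by
    rw [mul_assoc, sub_eq_iff_eq_add.mp h1, mul_add, mul_one, add_comm]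
  have hm := euler_zpow u _ hD m
  have hn := euler_zpow u _ hD n
  have hDth : (u * dt : R) * th = th * (u * dt) := by
    rw [mul_assoc, h9, ← mul_assoc, h7, mul_assoc]
  have hDdth : (u * dt : R) * dth = dth * (u * dt) := by
    rw [mul_assoc, h10, ← mul_assoc, h8, mul_assoc]
  have c1 : ∀ k : ℤ, th * ((u ^ k : Rˣ) : R) = ((u ^ k : Rˣ) : R) * th := fun k =>
    (Commute.units_zpow_right (show Commute th (u : R) from h7.symm) k).eq
  have c2 : ∀ k : ℤ, dth * ((u ^ k : Rˣ) : R) = ((u ^ k : Rˣ) : R) * dth := fun k =>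
    (Commute.units_zpow_right (show Commute dth (u : R) from h8.symm) k).eq
  have hc : ((u ^ n : Rˣ) : R) * ((u ^ m : Rˣ) : R) = ((u ^ m : Rˣ) : R) * ((u ^ n : Rˣ) : R) := by
    rw [← Units.val_mul, ← Units.val_mul, ← zpow_add, ← zpow_add, add_comm]
  rw [zpow_add, Units.val_mul]
  have c1m := c1 m
  have c1n := c1 n
  have c2m := c2 m
  have c2n := c2 n
  generalize ((u ^ m : Rˣ) : R) = A at *
  generalize ((u ^ n : Rˣ) : R) = B at *
  generalize (u * dt : R) = D at *
  have h4' : dth * th = 1 - th * dth := eq_sub_of_add_eq h4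
  have ex : ∀ {x y z : R}, x * y = z → ∀ w, x * (y * w) = z * w := by
    intro x y z h w; rw [← mul_assoc, h]
  simp only [mul_add, add_mul, mul_sub, sub_mul, mul_assoc, neg_mul, mul_neg, smul_mul_assoc,
    mul_smul_comm, hm, hn, ex hm, ex hn, hDth, ex hDth, hDdth, ex hDdth, c1m, c1n, c2m, c2n,
    ex c1m, ex c1n, ex c2m, ex c2n, hc, ex hc, h4', ex h4', h5, ex h5, mul_one, one_mul,
    mul_zero, zero_mul, smul_zero, sub_zero, add_zero, Int.cast_add]
  module
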